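/- Let H : ℝ → ℝ be the function with H(0) = 0 and H'(η) = 1/√(k(η)). Then H is twice differentiable with H''(η) = −f(η)/(2·k(η)) for every η ∈ ℝ; since η·f(η) ≥ 0, it follows that H''(η) ≤ 0 for η ≥ 0 and H''(η) ≥ 0 for η ≤ 0, so H is concave on [0, ∞) and convex on (−∞, 0]. -/

import Mathlib

open Real Set Filter MeasureTheory

noncomputable section

/-- `L(u) = (1/2)(u·√(1+u²) + arcsinh u)`, the antiderivative of `Q(ξ) = √(1+ξ²)` with `L 0 = 0`. -/
def Lfun (u : ℝ) : ℝ := (1/2) * (u * Real.sqrt (1 + u^2) + Real.arsinh u)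

/-- `û₁(η) = L⁻¹(−η/2)`. -/
def u1hat (η : ℝ) : ℝ := Function.invFun Lfun (-η/2)

/-- `k(η) = √(1 + û₁(η)²)`. -/
def kfun (η : ℝ) : ℝ := Real.sqrt (1 + (u1hat η)^2)

/-- `f(η) = k'(η)/√(k(η))`. -/
def ffun (η : ℝ) : ℝ := deriv kfun η / Real.sqrt (kfun η)

/-- `A(t) = exp(λ t / 2)`. -/
def Afun (lam t : ℝ) : ℝ := Real.exp (lam * t / 2)

lemma Lfun_hasDerivAt (u : ℝ) : HasDerivAt Lfun (Real.sqrt (1 + u^2)) u := by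
  have hpos : 0 < 1 + u^2 := by positivity
  have h1 : HasDerivAt (fun u : ℝ => 1 + u^2) (2 * u) u := by
    simpa using (hasDerivAt_pow 2 u).const_add 1
  have h2 := h1.sqrt hpos.ne'
  have h3 := (((hasDerivAt_id u).mul h2).add (Real.hasDerivAt_arsinh u)).const_mul (1/2 : ℝ)
  refine HasDerivAt.congr_deriv (f := Lfun) h3 ?_
  have hs : 0 < Real.sqrt (1 + u^2) := Real.sqrt_pos.2 hpos
  have hsq : Real.sqrt (1 + u^2) ^ 2 = 1 + u^2 := Real.sq_sqrt hpos.le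
  simp only [id]
  field_simp
  rw [hsq]; ring

lemma Lfun_strictMono : StrictMono Lfun :=
  strictMono_of_deriv_pos fun u => by
    rw [(Lfun_hasDerivAt u).deriv]; positivity

lemma Lfun_zero : Lfun 0 = 0 := by simp [Lfun]

lemma Lfun_surj : Function.Surjective Lfun := by
  have hc : Continuous Lfun :=
    continuous_iff_continuousAt.2 fun u => (Lfun_hasDerivAt u).continuousAt
  have hs : ∀ u : ℝ, 1 ≤ Real.sqrt (1 + u^2) := fun u => by
    rw [Real.one_le_sqrt]; nlinarith [sq_nonneg u]
  apply hc.surjective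
  · refine tendsto_atTop_mono' _ ?_ (tendsto_id.atTop_div_const (two_pos : (0:ℝ) < 2))
    filter_upwards [eventually_ge_atTop (0:ℝ)] with u hu
    have h := Real.arsinh_nonneg_iff.2 hu
    simp only [Lfun, id]
    nlinarith [hs u]
  · refine tendsto_atBot_mono' _ ?_ (tendsto_id.atBot_div_const (two_pos : (0:ℝ) < 2))
    filter_upwards [eventually_le_atBot (0:ℝ)] with u hu
    have h := Real.arsinh_nonpos_iff.2 hu
    simp only [Lfun, id]
    nlinarith [hs u]

lemma Lfun_invFun (y : ℝ) : Lfun (Function.invFun Lfun y) = y :=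
  Function.rightInverse_invFun Lfun_surj y

lemma invFun_Lfun_continuous : Continuous (Function.invFun Lfun) := by
  have : Function.invFun Lfun = (Lfun_strictMono.orderIsoOfSurjective Lfun Lfun_surj).symm := by
    funext y
    apply Lfun_strictMono.injective
    rw [Lfun_invFun]
    exact ((Lfun_strictMono.orderIsoOfSurjective Lfun Lfun_surj).apply_symm_apply y).symm
  rw [this]
  exact OrderIso.continuous _

lemma u1hat_hasDerivAt (η : ℝ) :
    HasDerivAt u1hat ((Real.sqrt (1 + (u1hat η)^2))⁻¹ * (-1/2)) η := by
  have h1 : HasDerivAt (Function.invFun Lfun) (Real.sqrt (1 + (u1hat η)^2))⁻¹ (-η/2) := by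
    refine HasDerivAt.of_local_left_inverse invFun_Lfun_continuous.continuousAt
      (Lfun_hasDerivAt _) ?_ (Eventually.of_forall Lfun_invFun)
    positivity
  have h2 : HasDerivAt (fun η : ℝ => -η/2) (-1/2) η := (hasDerivAt_id η).neg.div_const 2
  exact h1.comp η h2

lemma Lfun_u1hat (η : ℝ) : Lfun (u1hat η) = -η/2 := Lfun_invFun _

lemma kfun_pos (η : ℝ) : 0 < kfun η := by unfold kfun; positivity

lemma kfun_hasDerivAt (η : ℝ) :
    HasDerivAt kfun (-(u1hat η) / (2 * kfun η ^ 2)) η := by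
  have hpos : 0 < 1 + (u1hat η)^2 := by positivity
  have h := (((u1hat_hasDerivAt η).pow 2).const_add 1).sqrt hpos.ne'
  refine HasDerivAt.congr_deriv (f := kfun) h ?_
  have hk := kfun_pos η
  change _ * ((kfun η)⁻¹ * (-1/2)) / (2 * kfun η) = _
  field_simp
  simp

lemma ffun_nonneg {η : ℝ} (h : 0 ≤ η) : 0 ≤ ffun η := by
  have hu : u1hat η ≤ 0 := by
    rw [← Lfun_strictMono.le_iff_le, Lfun_u1hat, Lfun_zero]; linarith
  rw [ffun, (kfun_hasDerivAt η).deriv]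
  have : 0 ≤ -u1hat η := by linarith
  positivity

lemma ffun_nonpos {η : ℝ} (h : η ≤ 0) : ffun η ≤ 0 := by
  have hu : 0 ≤ u1hat η := by
    rw [← Lfun_strictMono.le_iff_le, Lfun_u1hat, Lfun_zero]; linarith
  rw [ffun, (kfun_hasDerivAt η).deriv, neg_div, neg_div, neg_nonpos]
  positivity

/-- the antiderivative `H` of `1/√k` with `H(0) = 0` satisfies
`H''(η) = −f(η)/(2k(η))`, hence `H` is concave on `[0,∞)` and convex on `(−∞,0]`. -/
theorem Hfun_second_derivative_concavity
    (H : ℝ → ℝ) (hH0 : H 0 = 0)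
    (hH' : ∀ η : ℝ, HasDerivAt H (1 / Real.sqrt (kfun η)) η) :
    (∀ η : ℝ, HasDerivAt (deriv H) (-ffun η / (2 * kfun η)) η) ∧
    (∀ η : ℝ, 0 ≤ η → deriv (deriv H) η ≤ 0) ∧
    (∀ η : ℝ, η ≤ 0 → 0 ≤ deriv (deriv H) η) ∧
    ConcaveOn ℝ (Set.Ici 0) H ∧
    ConvexOn ℝ (Set.Iic 0) H := by
  have hd : deriv H = fun η => 1 / Real.sqrt (kfun η) := funext fun η => (hH' η).deriv
  have h2 : ∀ η : ℝ, HasDerivAt (deriv H) (-ffun η / (2 * kfun η)) η := by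
    intro η
    have hk := kfun_pos η
    have hs : 0 < Real.sqrt (kfun η) := Real.sqrt_pos.2 hk
    have hkd : HasDerivAt kfun (deriv kfun η) η :=
      (kfun_hasDerivAt η).differentiableAt.hasDerivAt
    have h := (hkd.sqrt hk.ne').inv hs.ne'
    rw [hd]
    simp only [one_div]
    refine HasDerivAt.congr_deriv h ?_
    rw [Real.sq_sqrt hk.le, ffun]
    field_simp
  have hneg : ∀ η : ℝ, 0 ≤ η → deriv (deriv H) η ≤ 0 := by
    intro η hη
    rw [(h2 η).deriv, neg_div, neg_nonpos]
    have := kfun_pos η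
    have := ffun_nonneg hη
    positivity
  have hpos : ∀ η : ℝ, η ≤ 0 → 0 ≤ deriv (deriv H) η := by
    intro η hη
    rw [(h2 η).deriv]
    have := kfun_pos η
    have : 0 ≤ -ffun η := neg_nonneg.2 (ffun_nonpos hη)
    positivity
  have hcont : Continuous H := continuous_iff_continuousAt.2 fun η => (hH' η).continuousAt
  have hdiff : Differentiable ℝ H := fun η => (hH' η).differentiableAt
  have hdiff2 : Differentiable ℝ (deriv H) := fun η => (h2 η).differentiableAt
  refine ⟨h2, hneg, hpos, ?_, ?_⟩
  · refine concaveOn_of_deriv2_nonpos (convex_Ici 0) hcont.continuousOn hdiff.differentiableOn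
      hdiff2.differentiableOn ?_
    intro x hx
    exact hneg x (Set.mem_Ici.1 (interior_subset hx))
  · refine convexOn_of_deriv2_nonneg (convex_Iic 0) hcont.continuousOn hdiff.differentiableOn
      hdiff2.differentiableOn ?_
    intro x hx
    exact hpos x (Set.mem_Iic.1 (interior_subset hx))
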